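/- (Calibration asymptotics for strict partitions.) As z → 1⁻, the expected size of a Boltzmann-distributed strict partition satisfies Σ_{n=1}^{∞} n z^n / (1 + z^n) ~ π² / (12 (1 − z)²), i.e. the ratio of the two sides tends to 1. -/

import Mathlib

open Filter Real

/-!
Let `L(z) = ∑ n zⁿ / (1 - zⁿ)`. Since `x / (1 + x) = x / (1 - x) - 2 x² / (1 - x²)`, the sum over
strict partitions is `L(z) - 2 L(z²)`. Expanding geometric series and exchanging summations,
`L(z) = ∑ zⁿ / (1 - zⁿ)²`; after multiplication by `(1 - z)²` the terms become
`zⁿ / (1 + z + ⋯ + zⁿ⁻¹)² → 1 / n²`, dominated by their limits, so `(1 - z)² L(z) → ζ(2)`.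
As `(1 - z)² = (1 - z²)² / (1 + z)²`, the limit for strict partitions is
`ζ(2) - 2 ζ(2) / 4 = π² / 12`.
-/

lemma norm_pow_lt_one {𝕜 : Type*} [NormedDivisionRing 𝕜] {z : 𝕜} (hz : ‖z‖ < 1) {n : ℕ}
    (hn : n ≠ 0) : ‖z ^ n‖ < 1 := by
  rw [norm_pow]
  exact pow_lt_one₀ (norm_nonneg z) hz hn

section LambertSeries

variable {𝕜 : Type*} [NontriviallyNormedField 𝕜] [CompleteSpace 𝕜] {z : 𝕜}

lemma summable_mul_pow_div_one_sub_pow (hz : ‖z‖ < 1) :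
    Summable fun n : ℕ+ ↦ (n : 𝕜) * z ^ (n : ℕ) / (1 - z ^ (n : ℕ)) := by
  have h_nat := summable_norm_pow_mul_geometric_div_one_sub 1 hz
  simp only [pow_one] at h_nat
  exact (summable_pnat_iff_summable_nat (f := fun n ↦ (n : 𝕜) * z ^ n / (1 - z ^ n))).mpr h_nat

lemma tsum_mul_pow_div_one_add_pow_eq_sub (hz : ‖z‖ < 1) :
    ∑' n : ℕ+, (n : 𝕜) * z ^ (n : ℕ) / (1 + z ^ (n : ℕ)) =
      ∑' n : ℕ+, (n : 𝕜) * z ^ (n : ℕ) / (1 - z ^ (n : ℕ)) -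
        2 * ∑' n : ℕ+, (n : 𝕜) * (z ^ 2) ^ (n : ℕ) / (1 - (z ^ 2) ^ (n : ℕ)) := by
  have h_sq : ‖z ^ 2‖ < 1 := norm_pow_lt_one hz two_ne_zero
  rw [← tsum_mul_left, ← (summable_mul_pow_div_one_sub_pow hz).tsum_sub
    ((summable_mul_pow_div_one_sub_pow h_sq).mul_left 2)]
  refine tsum_congr fun n ↦ ?_
  have hzn : ‖z ^ (n : ℕ)‖ < 1 := norm_pow_lt_one hz n.ne_zero
  have h_sub : 1 - z ^ (n : ℕ) ≠ 0 := sub_ne_zero.mpr fun h ↦ by simp [← h] at hzn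
  have h_add : 1 + z ^ (n : ℕ) ≠ 0 := fun h ↦ by
    simp [eq_neg_of_add_eq_zero_right h] at hzn
  have h_factor : 1 - (z ^ 2) ^ (n : ℕ) = (1 - z ^ (n : ℕ)) * (1 + z ^ (n : ℕ)) := by ring
  rw [h_factor]
  field_simp
  ring

lemma tsum_mul_pow_div_one_sub_pow_eq_tsum_div_sq [NormSMulClass ℤ 𝕜] (hz : ‖z‖ < 1) :
    ∑' n : ℕ+, (n : 𝕜) * z ^ (n : ℕ) / (1 - z ^ (n : ℕ)) =
      ∑' n : ℕ+, z ^ (n : ℕ) / (1 - z ^ (n : ℕ)) ^ 2 := by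
  have sum_row (d : ℕ+) : ∑' c : ℕ+, (c : 𝕜) ^ 1 * z ^ (d * c : ℕ) =
      z ^ (d : ℕ) / (1 - z ^ (d : ℕ)) ^ 2 := by
    rw [← tsum_coe_mul_geometric_of_norm_lt_one (norm_pow_lt_one hz d.ne_zero),
      ← tsum_pnat_eq_tsum_of_eq_zero (by simp)]
    simp only [pow_one, pow_mul]
  calc ∑' n : ℕ+, (n : 𝕜) * z ^ (n : ℕ) / (1 - z ^ (n : ℕ))
      = ∑' n : ℕ+, (n : 𝕜) ^ 1 * z ^ (n : ℕ) / (1 - z ^ (n : ℕ)) := by simp only [pow_one]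
    _ = ∑' d : ℕ+, ∑' c : ℕ+, (c : 𝕜) ^ 1 * z ^ (d * c : ℕ) := by
      rw [tsum_pow_div_one_sub_eq_tsum_sigma hz, tsum_prod_pow_eq_tsum_sigma 1 hz]
    _ = ∑' n : ℕ+, z ^ (n : ℕ) / (1 - z ^ (n : ℕ)) ^ 2 := tsum_congr sum_row

end LambertSeries

lemma one_sub_sq_mul_div_one_sub_pow_sq {K : Type*} [Field K] {z : K} (hz : z ≠ 1) (a : K)
    (n : ℕ) :
    (1 - z) ^ 2 * (a / (1 - z ^ n) ^ 2) = a / (∑ i ∈ Finset.range n, z ^ i) ^ 2 := by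
  rw [← mul_neg_geom_sum, mul_pow, ← mul_div_assoc,
    mul_div_mul_left _ _ (pow_ne_zero 2 (sub_ne_zero.mpr hz.symm))]

lemma sq_mul_pow_pred_le_geom_sum_sq {z : ℝ} (hz : 0 ≤ z) (n : ℕ) :
    (n : ℝ) ^ 2 * z ^ (n - 1) ≤ (∑ i ∈ Finset.range n, z ^ i) ^ 2 := by
  -- Cauchy–Schwarz for the geometric sum and its reversal, whose terms multiply to `z ^ (n - 1)`.
  have cauchy_schwarz : (∑ _i ∈ Finset.range n, √(z ^ (n - 1))) ^ 2 ≤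
      (∑ i ∈ Finset.range n, z ^ i) * ∑ i ∈ Finset.range n, z ^ (n - 1 - i) := by
    refine Finset.sum_sq_le_sum_mul_sum_of_sq_le_mul _ (fun _ _ ↦ by positivity)
      (fun _ _ ↦ by positivity) fun i hi ↦ ?_
    rw [sq_sqrt (by positivity), ← pow_add,
      Nat.add_sub_of_le (Nat.le_sub_one_of_lt (Finset.mem_range.mp hi))]
  rwa [Finset.sum_range_reflect (z ^ ·), ← sq, Finset.sum_const, Finset.card_range, nsmul_eq_mul,
    mul_pow, sq_sqrt (by positivity)] at cauchy_schwarz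

lemma pow_div_geom_sum_sq_le_one_div_sq {z : ℝ} (hz₀ : 0 ≤ z) (hz₁ : z ≤ 1) (n : ℕ+) :
    z ^ (n : ℕ) / (∑ i ∈ Finset.range n, z ^ i) ^ 2 ≤ 1 / (n : ℝ) ^ 2 := by
  have h_pos : 0 < ∑ i ∈ Finset.range n, z ^ i := geom_sum_pos hz₀ n.ne_zero
  rw [div_le_div_iff₀ (by positivity) (by positivity), one_mul, mul_comm]
  calc (n : ℝ) ^ 2 * z ^ (n : ℕ)
      ≤ (n : ℝ) ^ 2 * z ^ ((n : ℕ) - 1) :=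
        mul_le_mul_of_nonneg_left (pow_le_pow_of_le_one hz₀ hz₁ (Nat.sub_le _ _)) (sq_nonneg _)
    _ ≤ (∑ i ∈ Finset.range n, z ^ i) ^ 2 := sq_mul_pow_pred_le_geom_sum_sq hz₀ n

lemma hasSum_pnat_one_div_sq : HasSum (fun n : ℕ+ ↦ 1 / (n : ℝ) ^ 2) (π ^ 2 / 6) :=
  (hasSum_pnat_iff (f := fun n : ℕ ↦ 1 / (n : ℝ) ^ 2)).mpr (by simpa using hasSum_zeta_two)

lemma tendsto_tsum_pow_div_geom_sum_sq :
    Tendsto (fun z : ℝ ↦ ∑' n : ℕ+, z ^ (n : ℕ) / (∑ i ∈ Finset.range n, z ^ i) ^ 2)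
      (nhdsWithin 1 (Set.Iio 1)) (nhds (π ^ 2 / 6)) := by
  rw [← hasSum_pnat_one_div_sq.tsum_eq]
  refine tendsto_tsum_of_dominated_convergence hasSum_pnat_one_div_sq.summable (fun n ↦ ?_) ?_
  · have h_cont : ContinuousAt
        (fun z : ℝ ↦ z ^ (n : ℕ) / (∑ i ∈ Finset.range n, z ^ i) ^ 2) 1 :=
      ContinuousAt.div (by fun_prop) (by fun_prop) (by simp)
    simpa using h_cont.tendsto.mono_left nhdsWithin_le_nhds
  · filter_upwards [Ioo_mem_nhdsLT (zero_lt_one (α := ℝ))] with z ⟨hz₀, hz₁⟩ n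
    rw [norm_of_nonneg (by positivity)]
    exact pow_div_geom_sum_sq_le_one_div_sq hz₀.le hz₁.le n

lemma tendsto_one_sub_sq_mul_tsum_mul_pow_div_one_sub_pow :
    Tendsto
      (fun z : ℝ ↦ (1 - z) ^ 2 * ∑' n : ℕ+, (n : ℝ) * z ^ (n : ℕ) / (1 - z ^ (n : ℕ)))
      (nhdsWithin 1 (Set.Iio 1)) (nhds (π ^ 2 / 6)) := by
  refine tendsto_tsum_pow_div_geom_sum_sq.congr' ?_
  filter_upwards [Ioo_mem_nhdsLT (zero_lt_one (α := ℝ))] with z ⟨hz₀, hz₁⟩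
  rw [tsum_mul_pow_div_one_sub_pow_eq_tsum_div_sq (by rwa [norm_of_nonneg hz₀.le]), ← tsum_mul_left]
  exact tsum_congr fun n ↦ (one_sub_sq_mul_div_one_sub_pow_sq hz₁.ne _ n).symm

lemma tendsto_sq_nhdsLT_one :
    Tendsto (fun z : ℝ ↦ z ^ 2) (nhdsWithin 1 (Set.Iio 1)) (nhdsWithin 1 (Set.Iio 1)) := by
  refine tendsto_nhdsWithin_iff.mpr ⟨?_, ?_⟩
  · simpa using ((continuous_pow 2).tendsto (1 : ℝ)).mono_left nhdsWithin_le_nhds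
  · filter_upwards [Ioo_mem_nhdsLT (zero_lt_one (α := ℝ))] with z ⟨hz₀, hz₁⟩
    exact pow_lt_one₀ hz₀.le hz₁ two_ne_zero

lemma tendsto_one_sub_sq_mul_tsum_mul_pow_div_one_add_pow :
    Tendsto
      (fun z : ℝ ↦ (1 - z) ^ 2 * ∑' n : ℕ+, (n : ℝ) * z ^ (n : ℕ) / (1 + z ^ (n : ℕ)))
      (nhdsWithin 1 (Set.Iio 1)) (nhds (π ^ 2 / 12)) := by
  have h_lambert := tendsto_one_sub_sq_mul_tsum_mul_pow_div_one_sub_pow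
  have h_lambert_sq := h_lambert.comp tendsto_sq_nhdsLT_one
  have h_cont : ContinuousAt (fun z : ℝ ↦ 2 / (1 + z) ^ 2) 1 :=
    ContinuousAt.div (by fun_prop) (by fun_prop) (by norm_num)
  have h_factor := h_cont.tendsto.mono_left (nhdsWithin_le_nhds (s := Set.Iio 1))
  have h_limit : π ^ 2 / 6 - 2 / (1 + 1) ^ 2 * (π ^ 2 / 6) = π ^ 2 / 12 := by ring
  rw [← h_limit]
  refine (h_lambert.sub (h_factor.mul h_lambert_sq)).congr' ?_
  filter_upwards [Ioo_mem_nhdsLT (zero_lt_one (α := ℝ))] with z ⟨hz₀, hz₁⟩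
  have h_one_sub_sq : (1 - z ^ 2) ^ 2 = (1 - z) ^ 2 * (1 + z) ^ 2 := by ring
  rw [tsum_mul_pow_div_one_add_pow_eq_sub (by rwa [norm_of_nonneg hz₀.le]), Function.comp_apply,
    h_one_sub_sq]
  field_simp

/-- **Calibration asymptotics for strict partitions.** As `z → 1⁻`,
the expected size of a Boltzmann-distributed strict partition satisfies
`∑_{n ≥ 1} n * z ^ n / (1 + z ^ n) ~ π ^ 2 / (12 * (1 - z) ^ 2)`, i.e. the ratio of
the two sides tends to `1`. -/
theorem strict_partition_expected_size_asymptotics :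
    Tendsto
      (fun z : ℝ =>
        (∑' n : ℕ, ((n : ℝ) + 1) * z ^ (n + 1) / (1 + z ^ (n + 1)))
          / (π ^ 2 / (12 * (1 - z) ^ 2)))
      (nhdsWithin 1 (Set.Iio 1)) (nhds 1) := by
  have h_limit := tendsto_one_sub_sq_mul_tsum_mul_pow_div_one_add_pow.div_const (π ^ 2 / 12)
  rw [div_self (by positivity)] at h_limit
  refine h_limit.congr fun z ↦ ?_
  rw [tsum_pnat_eq_tsum_succ (f := fun n : ℕ ↦ (n : ℝ) * z ^ n / (1 + z ^ n))]
  simp only [Nat.cast_add, Nat.cast_one]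
  field_simp
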